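/- The Pairing axiom is realized: let A be a pca. There exists an element e ∈ A such that for all x, y ∈ V(A) there exists z ∈ V(A) with (e)₀ and (e)₁ defined, (e)₀ = (e)₀ ⊩ x ∈ z, and (e)₁ = (e)₁ ⊩ y ∈ z. -/

import Mathlib

universe u

/-- A partial combinatory algebra: a set with at least two elements, a partial
binary application, and combinators `k`, `s` with `ka↓`, `sa↓`, `sab↓`,
`kab ≃ a` and `sabc ≃ ac(bc)`. -/
structure PCA (A : Type u) where
  app : A → A → Part A
  k : A
  s : A
  nontrivial : ∃ a b : A, a ≠ b
  k_def : ∀ a : A, (app k a).Dom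
  s_def : ∀ a : A, (app s a).Dom
  s_app_def : ∀ a b : A, ((app s a).bind fun x => app x b).Dom
  k_spec : ∀ a b : A, ((app k a).bind fun x => app x b) = Part.some a
  s_spec : ∀ a b c : A,
    (((app s a).bind fun x => app x b).bind fun x => app x c)
      = (app a c).bind fun u => (app b c).bind fun v => app u v

namespace PCA
variable {A : Type u} (P : PCA A)

/-- Apply a possibly undefined value to an element of `A` (left association). -/
def apl (x : Part A) (b : A) : Part A := x.bind fun a => P.app a b

end PCA

/-- The ZF-set coding the triple `⟨a, b, y⟩` (via an embedding `inj` of the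
pca carrier into the sets). -/
def TripleName {A : Type} (inj : A → ZFSet) (a b : A) (y : ZFSet) : ZFSet :=
  ZFSet.pair (inj a) (ZFSet.pair (inj b) y)

/-- The realizability universe `V(A)`: a ZF-set is a name iff it is a set of
triples `⟨a, b, y⟩` with `a b : A` and `y` a name.  (For injective `inj` the
decomposition of a triple is unique, so the two clauses express exactly this.) -/
inductive IsName {A : Type} (inj : A → ZFSet) : ZFSet → Prop
  | mk (x : ZFSet)
      (htriple : ∀ z ∈ x, ∃ (a b : A) (y : ZFSet), z = TripleName inj a b y)
      (hname : ∀ (a b : A) (y : ZFSet), TripleName inj a b y ∈ x → IsName inj y) :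
      IsName inj x

/-- Extensional generic realizability for the atomic formulas, relative to
fixed projection combinators `p0`, `p1`:
`Realizes P p0 p1 inj true a b x y` means `a = b ⊩ x ∈ y`, and
`Realizes P p0 p1 inj false a b x y` means `a = b ⊩ x = y`.
Since the value of a partial application is unique when it exists, the pairs
of hypotheses `(h1def, h1)` and `(h2def, h2)` of the `eq` constructor express
exactly "for every ⟨c,d,z⟩ ∈ x, (ac)₀ = (bd)₀ ⊩ z ∈ y" (with all the
applications defined), and symmetrically for `y` with `p1`; the relation is
well-founded in the rank of the names, hence this least fixed point is the
relation defined by transfinite recursion. -/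
inductive Realizes {A : Type} (P : PCA A) (p0 p1 : A) (inj : A → ZFSet) :
    Bool → A → A → ZFSet → ZFSet → Prop
  | mem {a b : A} {x y : ZFSet} (a0 b0 a1 b1 : A) (z : ZFSet)
      (ha0 : a0 ∈ P.app p0 a) (hb0 : b0 ∈ P.app p0 b)
      (ha1 : a1 ∈ P.app p1 a) (hb1 : b1 ∈ P.app p1 b)
      (hz : TripleName inj a0 b0 z ∈ y)
      (he : Realizes P p0 p1 inj false a1 b1 x z) :
      Realizes P p0 p1 inj true a b x y
  | eq {a b : A} {x y : ZFSet}
      (h1def : ∀ (c d : A) (z : ZFSet), TripleName inj c d z ∈ x →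
        ∃ u v u0 v0 : A, u ∈ P.app a c ∧ v ∈ P.app b d ∧
          u0 ∈ P.app p0 u ∧ v0 ∈ P.app p0 v)
      (h1 : ∀ (c d : A) (z : ZFSet) (u v u0 v0 : A), TripleName inj c d z ∈ x →
        u ∈ P.app a c → v ∈ P.app b d → u0 ∈ P.app p0 u → v0 ∈ P.app p0 v →
        Realizes P p0 p1 inj true u0 v0 z y)
      (h2def : ∀ (c d : A) (z : ZFSet), TripleName inj c d z ∈ y →
        ∃ u v u1 v1 : A, u ∈ P.app a c ∧ v ∈ P.app b d ∧
          u1 ∈ P.app p1 u ∧ v1 ∈ P.app p1 v)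
      (h2 : ∀ (c d : A) (z : ZFSet) (u v u1 v1 : A), TripleName inj c d z ∈ y →
        u ∈ P.app a c → v ∈ P.app b d → u1 ∈ P.app p1 u → v1 ∈ P.app p1 v →
        Realizes P p0 p1 inj true u1 v1 z x) :
      Realizes P p0 p1 inj false a b x y

/-- `a = b ⊩ x = y`. -/
def RealEq {A : Type} (P : PCA A) (p0 p1 : A) (inj : A → ZFSet) (a b : A) (x y : ZFSet) : Prop :=
  Realizes P p0 p1 inj false a b x y

/-- `a = b ⊩ x ∈ y`. -/
def RealMem {A : Type} (P : PCA A) (p0 p1 : A) (inj : A → ZFSet) (a b : A) (x y : ZFSet) : Prop :=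
  Realizes P p0 p1 inj true a b x y

/-!
A realizer of `x = x` that does not depend on the name `x` can send each `c` to the pair
`⟨⟨c, i⟩, ⟨c, i⟩⟩`, where `i` is the realizer itself. Combinatory completeness and the fixed point
theorem for partial combinatory algebras provide such an `i`, and `∈`-induction on names shows that
it works. Then `e = ⟨⟨i, i⟩, ⟨i, i⟩⟩` realizes pairing, with `z = {⟨i, i, x⟩, ⟨i, i, y⟩}`.
-/

namespace PCA

section CombinatoryCompleteness

variable {A : Type u} (P : PCA A)

theorem exists_app_k_eq_some (a : A) :
    ∃ f, P.app P.k a = Part.some f ∧ ∀ b, P.app f b = Part.some a := by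
  obtain ⟨f, hf⟩ : ∃ f, P.app P.k a = Part.some f := ⟨_, (Part.some_get (P.k_def a)).symm⟩
  exact ⟨f, hf, fun b => by simpa only [hf, Part.bind_some] using P.k_spec a b⟩

theorem exists_apl_app_s_eq_some (a b : A) :
    ∃ f, P.apl (P.app P.s a) b = Part.some f ∧
      ∀ c, P.app f c = (P.app a c).bind fun u => (P.app b c).bind fun v => P.app u v := by
  obtain ⟨f, hf⟩ : ∃ f, P.apl (P.app P.s a) b = Part.some f :=
    ⟨_, (Part.some_get (P.s_app_def a b)).symm⟩
  refine ⟨f, hf, fun c => ?_⟩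
  calc P.app f c = (P.apl (P.app P.s a) b).bind fun x => P.app x c := by rw [hf, Part.bind_some]
    _ = (P.app a c).bind fun u => (P.app b c).bind fun v => P.app u v := P.s_spec a b c

/-- Applicative terms over `A` in `n` variables, with de Bruijn indices: `lam` binds variable
`0`. -/
inductive Term (A : Type u) (n : ℕ) : Type u
  | var (i : Fin n) : Term A n
  | const (a : A) : Term A n
  | app (t u : Term A n) : Term A n

/-- The partial value of a term under an assignment of its variables; an application is defined
only if both of its constituents are. -/
def eval {n : ℕ} (ρ : Fin n → A) : Term A n → Part A
  | .var i => Part.some (ρ i)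
  | .const a => Part.some a
  | .app t u => (eval ρ t).bind fun a => (eval ρ u).bind fun b => P.app a b

/-- Bracket abstraction of variable `0`. A compound term free of that variable is not abstracted as
a whole to `k t`, since `t` may be undefined whereas an abstraction must always have a value. -/
def lam {n : ℕ} : Term A (n + 1) → Term A n
  | .var i => Fin.cases (.app (.app (.const P.s) (.const P.k)) (.const P.k))
      (fun j => .app (.const P.k) (.var j)) i
  | .const a => .app (.const P.k) (.const a)
  | .app t u => .app (.app (.const P.s) (lam t)) (lam u)

theorem exists_eval_lam_eq_some {n : ℕ} (ρ : Fin n → A) (t : Term A (n + 1)) :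
    ∃ f, P.eval ρ (P.lam t) = Part.some f ∧
      ∀ a, P.app f a = P.eval (Matrix.vecCons a ρ) t := by
  induction t with
  | var i =>
    cases i using Fin.cases with
    | zero =>
      obtain ⟨f, hf, hfapp⟩ := P.exists_apl_app_s_eq_some P.k P.k
      refine ⟨f, by simpa [lam, eval, apl] using hf, fun a => ?_⟩
      obtain ⟨g, hg, hgapp⟩ := P.exists_app_k_eq_some a
      simp [hfapp, hg, hgapp, eval]
    | succ j => simpa [lam, eval] using P.exists_app_k_eq_some (ρ j)
  | const a => simpa [lam, eval] using P.exists_app_k_eq_some a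
  | app t u iht ihu =>
    obtain ⟨f, hf, hfapp⟩ := iht
    obtain ⟨g, hg, hgapp⟩ := ihu
    simpa [lam, eval, hf, hg, hfapp, hgapp, apl] using P.exists_apl_app_s_eq_some f g

theorem exists_app_app_eq_eval (t : Term A 2) :
    ∃ f, ∀ x, ∃ g, P.app f x = Part.some g ∧ ∀ y, P.app g y = P.eval ![y, x] t := by
  obtain ⟨f, -, hf⟩ := P.exists_eval_lam_eq_some ![] (P.lam t)
  refine ⟨f, fun x => ?_⟩
  rw [hf x]
  exact P.exists_eval_lam_eq_some ![x] t

/-- With `d = λ x y, f (x x) y`, the application `d d` is defined because `d` is a function of two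
arguments, and it is the required fixed point. -/
theorem exists_app_eq_apl_app_self (f : A) :
    ∃ g, ∀ y, P.app g y = P.apl (P.app f g) y := by
  obtain ⟨d, hd⟩ := P.exists_app_app_eq_eval
    (.app (.app (.const f) (.app (.var 1) (.var 1))) (.var 0))
  obtain ⟨g, hg, hgapp⟩ := hd d
  exact ⟨g, fun y => by simp [hgapp, eval, hg, apl]⟩

end CombinatoryCompleteness

/-- The combinators `p`, `p0`, `p1` form a pairing: `pab` is defined, and `p0` and `p1` project it
to `a` and `b`. -/
structure IsPairing {A : Type u} (P : PCA A) (p p0 p1 : A) : Prop where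
  dom : ∀ a b : A, (P.apl (P.app p a) b).Dom
  bind_fst : ∀ a b : A, ((P.apl (P.app p a) b).bind fun w => P.app p0 w) = Part.some a
  bind_snd : ∀ a b : A, ((P.apl (P.app p a) b).bind fun w => P.app p1 w) = Part.some b

namespace IsPairing

variable {A : Type u} {P : PCA A} {p p0 p1 : A}

/-- The element `pab` coding the pair of `a` and `b`, as a total function on `A`. -/
def pair (h : P.IsPairing p p0 p1) (a b : A) : A := (P.apl (P.app p a) b).get (h.dom a b)

theorem apl_app_eq_some_pair (h : P.IsPairing p p0 p1) (a b : A) :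
    P.apl (P.app p a) b = Part.some (h.pair a b) :=
  (Part.some_get (h.dom a b)).symm

theorem app_fst_pair (h : P.IsPairing p p0 p1) (a b : A) :
    P.app p0 (h.pair a b) = Part.some a := by
  simpa only [h.apl_app_eq_some_pair, Part.bind_some] using h.bind_fst a b

theorem app_snd_pair (h : P.IsPairing p p0 p1) (a b : A) :
    P.app p1 (h.pair a b) = Part.some b := by
  simpa only [h.apl_app_eq_some_pair, Part.bind_some] using h.bind_snd a b

theorem exists_app_eq_pair_pair_self (h : P.IsPairing p p0 p1) :
    ∃ i, ∀ c, P.app i c = Part.some (h.pair (h.pair c i) (h.pair c i)) := by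
  have eval_pair {n : ℕ} {ρ : Fin n → A} {t u : Term A n} {a b : A}
      (ht : P.eval ρ t = Part.some a) (hu : P.eval ρ u = Part.some b) :
      P.eval ρ (.app (.app (.const p) t) u) = Part.some (h.pair a b) := by
    simpa [eval, ht, hu, apl] using h.apl_app_eq_some_pair a b
  let ci : Term A 2 := .app (.app (.const p) (.var 0)) (.var 1)
  obtain ⟨f, hf⟩ := P.exists_app_app_eq_eval (.app (.app (.const p) ci) ci)
  obtain ⟨i, hi⟩ := P.exists_app_eq_apl_app_self f
  obtain ⟨g, hg, hgapp⟩ := hf i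
  have hci (c : A) : P.eval ![c, i] ci = Part.some (h.pair c i) := eval_pair rfl rfl
  refine ⟨i, fun c => ?_⟩
  calc P.app i c = P.apl (P.app f i) c := hi c
    _ = P.app g c := by rw [hg, apl, Part.bind_some]
    _ = Part.some (h.pair (h.pair c i) (h.pair c i)) :=
      (hgapp c).trans (eval_pair (hci c) (hci c))

end IsPairing

end PCA

section Names

variable {A : Type} {inj : A → ZFSet} {x y : ZFSet}

theorem eq_of_tripleName_eq {a b c d : A} (h : TripleName inj a b x = TripleName inj c d y) :
    x = y :=
  (ZFSet.pair_injective (ZFSet.pair_injective h).2).2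

theorem IsName.pair (hx : IsName inj x) (hy : IsName inj y) (a b c d : A) :
    IsName inj {TripleName inj a b x, TripleName inj c d y} := by
  refine IsName.mk _ (fun w hw => ?_) (fun a' b' w hw => ?_)
  · rcases ZFSet.mem_pair.1 hw with rfl | rfl
    exacts [⟨a, b, x, rfl⟩, ⟨c, d, y, rfl⟩]
  · rcases ZFSet.mem_pair.1 hw with hw | hw
    exacts [eq_of_tripleName_eq hw ▸ hx, eq_of_tripleName_eq hw ▸ hy]

end Names

section Realizability

variable {A : Type} {P : PCA A} {p p0 p1 : A} {inj : A → ZFSet} {x y z : ZFSet}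

theorem realEq_of_exists {a b : A}
    (hxy : ∀ c d w, TripleName inj c d w ∈ x →
      ∃ u ∈ (P.app a c).bind (P.app p0), ∃ v ∈ (P.app b d).bind (P.app p0),
        RealMem P p0 p1 inj u v w y)
    (hyx : ∀ c d w, TripleName inj c d w ∈ y →
      ∃ u ∈ (P.app a c).bind (P.app p1), ∃ v ∈ (P.app b d).bind (P.app p1),
        RealMem P p0 p1 inj u v w x) :
    RealEq P p0 p1 inj a b x y := by
  refine Realizes.eq (fun c d w hw => ?_) (fun c d w u v u0 v0 hw hu hv hu0 hv0 => ?_)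
    (fun c d w hw => ?_) (fun c d w u v u1 v1 hw hu hv hu1 hv1 => ?_)
  · obtain ⟨u0, hu0, v0, hv0, -⟩ := hxy c d w hw
    obtain ⟨u, hu, hu0⟩ := Part.mem_bind_iff.1 hu0
    obtain ⟨v, hv, hv0⟩ := Part.mem_bind_iff.1 hv0
    exact ⟨u, v, u0, v0, hu, hv, hu0, hv0⟩
  · obtain ⟨u0', hu0', v0', hv0', hmem⟩ := hxy c d w hw
    obtain rfl := Part.mem_unique (Part.mem_bind hu hu0) hu0'
    obtain rfl := Part.mem_unique (Part.mem_bind hv hv0) hv0'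
    exact hmem
  · obtain ⟨u1, hu1, v1, hv1, -⟩ := hyx c d w hw
    obtain ⟨u, hu, hu1⟩ := Part.mem_bind_iff.1 hu1
    obtain ⟨v, hv, hv1⟩ := Part.mem_bind_iff.1 hv1
    exact ⟨u, v, u1, v1, hu, hv, hu1, hv1⟩
  · obtain ⟨u1', hu1', v1', hv1', hmem⟩ := hyx c d w hw
    obtain rfl := Part.mem_unique (Part.mem_bind hu hu1) hu1'
    obtain rfl := Part.mem_unique (Part.mem_bind hv hv1) hv1'
    exact hmem

namespace PCA.IsPairing

theorem realMem_pair (h : P.IsPairing p p0 p1) {a b c d : A} (hz : TripleName inj a b z ∈ y)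
    (hxz : RealEq P p0 p1 inj c d x z) :
    RealMem P p0 p1 inj (h.pair a c) (h.pair b d) x y :=
  Realizes.mem a b c d z
    (Part.eq_some_iff.1 (h.app_fst_pair a c)) (Part.eq_some_iff.1 (h.app_fst_pair b d))
    (Part.eq_some_iff.1 (h.app_snd_pair a c)) (Part.eq_some_iff.1 (h.app_snd_pair b d)) hz hxz

theorem realEq_self (h : P.IsPairing p p0 p1) {i : A}
    (hi : ∀ c, P.app i c = Part.some (h.pair (h.pair c i) (h.pair c i))) (hx : IsName inj x) :
    RealEq P p0 p1 inj i i x x := by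
  induction hx with
  | mk x _ _ ih =>
    have mem_self (c d : A) (w : ZFSet) (hw : TripleName inj c d w ∈ x) :
        RealMem P p0 p1 inj (h.pair c i) (h.pair d i) w x :=
      h.realMem_pair hw (ih c d w hw)
    have fst_app (c : A) : h.pair c i ∈ (P.app i c).bind (P.app p0) := by
      simp only [hi, Part.bind_some, h.app_fst_pair, Part.mem_some_iff]
    have snd_app (c : A) : h.pair c i ∈ (P.app i c).bind (P.app p1) := by
      simp only [hi, Part.bind_some, h.app_snd_pair, Part.mem_some_iff]
    exact realEq_of_exists
      (fun c d w hw => ⟨_, fst_app c, _, fst_app d, mem_self c d w hw⟩)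
      (fun c d w hw => ⟨_, snd_app c, _, snd_app d, mem_self c d w hw⟩)

end PCA.IsPairing

end Realizability

/-- **The Pairing axiom is realized**: there is `e ∈ A` such that for all
`x, y ∈ V(A)` there is `z ∈ V(A)` with `(e)₀` and `(e)₁` defined,
`(e)₀ = (e)₀ ⊩ x ∈ z` and `(e)₁ = (e)₁ ⊩ y ∈ z`. -/
theorem pairing_realized {A : Type} (P : PCA A)
    (p p0 p1 : A)
    (hp : ∀ a b : A, (P.apl (P.app p a) b).Dom)
    (hp0 : ∀ a b : A, ((P.apl (P.app p a) b).bind fun w => P.app p0 w) = Part.some a)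
    (hp1 : ∀ a b : A, ((P.apl (P.app p a) b).bind fun w => P.app p1 w) = Part.some b)
    (inj : A → ZFSet) (hinj : Function.Injective inj)
    :
    ∃ e : A, ∀ x y : ZFSet, IsName inj x → IsName inj y →
      ∃ z : ZFSet, IsName inj z ∧
        (∃ e0 : A, e0 ∈ P.app p0 e ∧ RealMem P p0 p1 inj e0 e0 x z) ∧
        (∃ e1 : A, e1 ∈ P.app p1 e ∧ RealMem P p0 p1 inj e1 e1 y z) := by
  have h : P.IsPairing p p0 p1 := ⟨hp, hp0, hp1⟩
  obtain ⟨i, hi⟩ := h.exists_app_eq_pair_pair_self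
  have mem {x z : ZFSet} (hx : IsName inj x) (hz : TripleName inj i i x ∈ z) :
      RealMem P p0 p1 inj (h.pair i i) (h.pair i i) x z :=
    h.realMem_pair hz (h.realEq_self hi hx)
  refine ⟨h.pair (h.pair i i) (h.pair i i), fun x y hx hy =>
    ⟨{TripleName inj i i x, TripleName inj i i y}, hx.pair hy i i i i, ?_, ?_⟩⟩
  · exact ⟨_, Part.eq_some_iff.1 (h.app_fst_pair _ _), mem hx (ZFSet.mem_pair.2 (.inl rfl))⟩
  · exact ⟨_, Part.eq_some_iff.1 (h.app_snd_pair _ _), mem hy (ZFSet.mem_pair.2 (.inr rfl))⟩
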